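/- Let G_τ be a bidirected graph containing no b-circuit. Then G_τ has a unique transitive reduction, and it is obtained from G_τ by removing exactly the set R(G_τ) of redundant edges, i.e., the edges {x^α,y^β} of G_τ for which G_τ contains a b-path from x^α to y^β not using that edge. -/

import Mathlib

/-- A signed vertex `x^α` : a vertex together with a sign in `ℤˣ`. -/
abbrev SV (V : Type) := V × ℤˣ

/-- A dart : an ordered signed edge `(x^α, y^β)`, traversed from `x` (entered with
half-edge sign `α`) to `y` (left with half-edge sign `β`). -/
abbrev BDart (V : Type) := SV V × SV V

/-- A bidirected graph on the vertex set `V`, given as its set of (unordered) signed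
edges `{x^α, y^β}`; the half-edge of such an edge at `x` has sign `α` and the
half-edge at `y` has sign `β`. -/
abbrev BGraph (V : Type) := Set (Sym2 (SV V))

/-- `IsWalk G x l y` : the list of darts `l` forms a chain from `x` to `y` in `G`. -/
def IsWalk {V : Type} (G : BGraph V) : V → List (BDart V) → V → Prop
  | x, [], y => x = y
  | x, d :: l, y => d.1.1 = x ∧ Sym2.mk d.1 d.2 ∈ G ∧ IsWalk G d.2.1 l y

/-- `IsBWalk G x α l y β` : `l` is a b-walk from `x^α` to `y^β` : a nonempty chain
from `x` to `y` whose first half-edge sign at `x` is `α`, whose last half-edge sign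
at `y` is `β`, and such that at every internal vertex occurrence the two incident
half-edge signs sum to `0`. -/
def IsBWalk {V : Type} (G : BGraph V) (x : V) (α : ℤˣ) (l : List (BDart V)) (y : V)
    (β : ℤˣ) : Prop :=
  l ≠ [] ∧ IsWalk G x l y ∧ (∀ d ∈ l.head?, d.1.2 = α) ∧ (∀ d ∈ l.getLast?, d.2.2 = β) ∧
    List.Chain' (fun d d' => ((d.2.2 : ℤ) + (d'.1.2 : ℤ) = 0)) l

/-- `IsBPath G x α l y β` : `l` is a b-path from `x^α` to `y^β` : a b-walk from `x^α`
to `y^β` that is minimal, i.e. no proper subsequence of its darts, taken in the same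
order, is a b-walk from `x^α` to `y^β`. -/
def IsBPath {V : Type} (G : BGraph V) (x : V) (α : ℤˣ) (l : List (BDart V)) (y : V)
    (β : ℤˣ) : Prop :=
  IsBWalk G x α l y β ∧ ∀ l', l'.Sublist l → l' ≠ l → ¬ IsBWalk G x α l' y β

/-- The transitive closure `Ft G` : its edges are the edges `{x^α, y^β}` for which
`G` contains a b-path from `x^α` to `y^β`. -/
def Ft {V : Type} (G : BGraph V) : BGraph V :=
  {e | ∃ x α y β l, IsBPath G x α l y β ∧ e = Sym2.mk (x, α) (y, β)}

/-- The transitive closure `ft G H` of the partial graph `H` within `G` : the edges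
of `H` together with every edge `{x^α, y^β}` of `G` for which `H` contains a b-path
from `x^α` to `y^β`. -/
def ft {V : Type} (G H : BGraph V) : BGraph V :=
  H ∪ {e | e ∈ G ∧ ∃ x α y β l, IsBPath H x α l y β ∧ e = Sym2.mk (x, α) (y, β)}

/-- `IsTR G H` : `H` is a transitive reduction of `G` : a partial graph of `G`
minimal with the property `ft G H = G`. -/
def IsTR {V : Type} (G H : BGraph V) : Prop :=
  H ⊆ G ∧ ft G H = G ∧ ∀ H', H' ⊂ H → ft G H' ≠ G

/-- A bidirected graph has no b-circuit if it contains no b-path from `x^α` to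
`x^{-α}` for any vertex `x` and sign `α`. -/
def NoBCircuit {V : Type} (G : BGraph V) : Prop :=
  ¬ ∃ (x : V) (α : ℤˣ) (l : List (BDart V)), IsBPath G x α l x (-α)

/-- The set of redundant edges of `G` : the edges `{x^α, y^β}` of `G` for which `G`
contains a b-path from `x^α` to `y^β` not using that edge. -/
def Redundant {V : Type} (G : BGraph V) : BGraph V :=
  {e | e ∈ G ∧ ∃ x α y β l, e = Sym2.mk (x, α) (y, β) ∧ IsBPath G x α l y β ∧
    e ∉ l.map (fun d => Sym2.mk d.1 d.2)}

/-!
Reading a signed edge `{x^α, y^β}` as the arcs `x^α ⟶ y^{-β}` and `y^β ⟶ x^{-α}` on signed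
vertices turns b-walks into directed walks. Without b-circuits, reachability is then a strict order
whose bounded intervals are finite, so it is generated by its covering pairs. A covering pair is an
arc, and its edge is not redundant, since a b-path avoiding that edge would pass through an
intermediate signed vertex. Hence the non-redundant edges generate `G`, and every generating partial
graph contains them: they form the least generating partial graph, which is therefore the only
minimal one.
-/

open Relation

theorem transGen_cover_of_finite_between {α : Type*} {r : α → α → Prop} [IsStrictOrder α r]
    (hfin : ∀ a b, {c | r a c ∧ r c b}.Finite) {a b : α} (hab : r a b) :
    TransGen (fun a b => r a b ∧ ∀ c, r a c → ¬ r c b) a b := by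
  let := partialOrderOfSO r
  have hIcc (a b : α) : (Set.Icc a b).Finite :=
    (((hfin a b).insert b).insert a).subset fun c ⟨hac, hcb⟩ => by
      rcases hac.eq_or_lt with rfl | hac
      · exact Set.mem_insert _ _
      · rcases hcb.eq_or_lt with rfl | hcb
        · exact Set.mem_insert_of_mem _ (Set.mem_insert _ _)
        · exact Set.mem_insert_of_mem _ (Set.mem_insert_of_mem _ ⟨hac, hcb⟩)
  let := LocallyFiniteOrder.ofFiniteIcc hIcc
  have hlt : a < b := hab
  exact TransGen.mono (fun _ _ h => ⟨h.1, fun _ hac => h.2 hac⟩) _ _ (lt_iff_transGen_covBy.1 hlt)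

section

variable {V : Type} {G H : BGraph V} {u v : SV V} {x y : V} {α β : ℤˣ} {l : List (BDart V)}

/-- The signed vertex `x^{-α}` opposite to `x^α`. -/
def SV.opp (u : SV V) : SV V := (u.1, -u.2)

@[simp]
theorem SV.opp_opp (u : SV V) : SV.opp (SV.opp u) = u := by
  simp only [SV.opp, neg_neg, Prod.mk.eta]

/-- The arcs of the directed double cover of `G`, whose vertices are the signed vertices: an edge
`{x^α, y^β}` gives the arcs `x^α ⟶ y^{-β}` and `y^β ⟶ x^{-α}`. The sign at the head is reversed so
that consecutive edges of a b-walk become consecutive arcs. -/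
def BGraph.Arc (G : BGraph V) (u v : SV V) : Prop := s(u, SV.opp v) ∈ G

/-- Reachability along a nonempty directed walk in the double cover of `G`; by construction of the
arcs, `x^α` reaches `y^{-β}` exactly when `G` has a b-walk from `x^α` to `y^β`. -/
abbrev BGraph.Reach (G : BGraph V) : SV V → SV V → Prop := TransGen G.Arc

theorem BGraph.arc_opp_iff : G.Arc u (SV.opp v) ↔ s(u, v) ∈ G := by
  rw [BGraph.Arc, SV.opp_opp]

theorem BGraph.Arc.opp (h : G.Arc u v) : G.Arc (SV.opp v) (SV.opp u) :=
  BGraph.arc_opp_iff.2 (Sym2.eq_swap ▸ h)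

theorem BGraph.Reach.opp (h : G.Reach u v) : G.Reach (SV.opp v) (SV.opp u) :=
  transGen_swap.1 (h.lift SV.opp fun _ _ hArc => hArc.opp)

theorem IsWalk.edge_mem (h : IsWalk G x l y) {d : BDart V} (hd : d ∈ l) : s(d.1, d.2) ∈ G := by
  induction l generalizing x with
  | nil => exact absurd hd List.not_mem_nil
  | cons d' l ih =>
    rcases List.mem_cons.1 hd with rfl | hd
    · exact h.2.1
    · exact ih h.2.2 hd

theorem IsWalk.of_edges_mem (h : IsWalk G x l y) (hl : ∀ d ∈ l, s(d.1, d.2) ∈ H) :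
    IsWalk H x l y := by
  induction l generalizing x with
  | nil => exact h
  | cons d l ih =>
    have ⟨hd, hl⟩ := List.forall_mem_cons.1 hl
    exact ⟨h.1, hd, ih h.2.2 hl⟩

theorem IsBWalk.of_edges_mem (h : IsBWalk G x α l y β) (hl : ∀ d ∈ l, s(d.1, d.2) ∈ H) :
    IsBWalk H x α l y β :=
  ⟨h.1, h.2.1.of_edges_mem hl, h.2.2⟩

theorem IsBPath.mono (hHG : H ⊆ G) (h : IsBPath H x α l y β) : IsBPath G x α l y β := by
  have hH : ∀ d ∈ l, s(d.1, d.2) ∈ H := fun _ => h.1.2.1.edge_mem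
  refine ⟨h.1.of_edges_mem fun d hd => hHG (hH d hd), fun l' hsub hne hwalk => ?_⟩
  exact h.2 l' hsub hne (hwalk.of_edges_mem fun d hd => hH d (hsub.subset hd))

theorem IsBWalk.exists_isBPath (h : IsBWalk G x α l y β) : ∃ l', IsBPath G x α l' y β := by
  obtain ⟨l', hwalk, hmin⟩ :=
    (measure List.length).wf.has_min {l | IsBWalk G x α l y β} ⟨l, h⟩
  exact ⟨l', hwalk, fun l'' hsub hne hwalk' =>
    hmin l'' hwalk' (hsub.length_le.lt_of_ne (mt hsub.eq_of_length hne))⟩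

theorem isBWalk_iff_isChain :
    IsBWalk G x α l y β ↔ l ≠ [] ∧ IsWalk G x l y ∧ (∀ d ∈ l.head?, d.1.2 = α) ∧
      (∀ d ∈ l.getLast?, d.2.2 = β) ∧ l.IsChain fun d d' => d'.1.2 = -d.2.2 := by
  have sign_add_eq_zero (a b : ℤˣ) : (a : ℤ) + b = 0 ↔ b = -a := by
    rw [add_eq_zero_iff_eq_neg', ← Units.val_neg, Units.val_inj]
  simp only [← sign_add_eq_zero]
  rfl

theorem isBWalk_cons {d : BDart V} :
    IsBWalk G x α (d :: l) y β ↔ d.1 = (x, α) ∧ s(d.1, d.2) ∈ G ∧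
      (l = [] ∧ d.2 = (y, β) ∨ IsBWalk G d.2.1 (-d.2.2) l y β) := by
  obtain ⟨⟨a, s⟩, ⟨b, t⟩⟩ := d
  cases l with
  | nil =>
    simp only [isBWalk_iff_isChain, IsWalk, ne_eq, reduceCtorEq, not_false_eq_true,
      not_true_eq_false, List.head?_cons, List.getLast?_singleton, Option.mem_def,
      Option.some.injEq, forall_eq', List.isChain_singleton, Prod.mk.injEq]
    tauto
  | cons d' l =>
    simp only [isBWalk_iff_isChain, IsWalk, ne_eq, reduceCtorEq, not_false_eq_true, true_and,
      false_and, false_or, List.head?_cons, Option.mem_def, Option.some.injEq, forall_eq',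
      List.getLast?_cons_cons, List.isChain_cons_cons, Prod.mk.injEq]
    tauto

theorem IsBWalk.reach (h : IsBWalk G x α l y β) : G.Reach (x, α) (SV.opp (y, β)) := by
  induction l generalizing x α with
  | nil => exact absurd rfl h.1
  | cons d l ih =>
    obtain ⟨hd, hedge, htail⟩ := isBWalk_cons.1 h
    have hArc : G.Arc (x, α) (SV.opp d.2) := hd ▸ BGraph.arc_opp_iff.2 hedge
    rcases htail with ⟨-, hlast⟩ | htail
    · exact .single (hlast ▸ hArc)
    · exact .head hArc (ih htail)

theorem IsBWalk.exists_reach_between (h : IsBWalk G x α l y β)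
    (hl : l ≠ [((x, α), (y, β))]) :
    ∃ w, G.Reach (x, α) w ∧ G.Reach w (SV.opp (y, β)) := by
  cases l with
  | nil => exact absurd rfl h.1
  | cons d l =>
    obtain ⟨hd, hedge, ⟨rfl, hlast⟩ | htail⟩ := isBWalk_cons.1 h
    · exact absurd (congrArg (fun d => [d]) (Prod.ext hd hlast)) hl
    · exact ⟨SV.opp d.2, .single (hd ▸ BGraph.arc_opp_iff.2 hedge), htail.reach⟩

theorem BGraph.Reach.exists_isBWalk (h : G.Reach u v) :
    ∃ l, IsBWalk G u.1 u.2 l v.1 (-v.2) := by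
  induction h using TransGen.head_induction_on with
  | @single u hArc => exact ⟨[(u, SV.opp v)], isBWalk_cons.2 ⟨rfl, hArc, .inl ⟨rfl, rfl⟩⟩⟩
  | @head u w hArc _ ih =>
    obtain ⟨l, hl⟩ := ih
    refine ⟨(u, SV.opp w) :: l, isBWalk_cons.2 ⟨rfl, hArc, .inr ?_⟩⟩
    simpa only [SV.opp, neg_neg] using hl

theorem BGraph.Reach.exists_isBPath (h : G.Reach u v) :
    ∃ l, IsBPath G u.1 u.2 l v.1 (-v.2) :=
  let ⟨_, hl⟩ := h.exists_isBWalk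
  hl.exists_isBPath

theorem NoBCircuit.isStrictOrder_reach (h : NoBCircuit G) : IsStrictOrder (SV V) G.Reach where
  irrefl u hu := h ⟨u.1, u.2, hu.exists_isBPath⟩
  trans _ _ _ := TransGen.trans

theorem exists_reach_between_of_mem_redundant (h : s(u, SV.opp v) ∈ Redundant G) :
    ∃ w, G.Reach u w ∧ G.Reach w v := by
  obtain ⟨-, x, α, y, β, l, he, hpath, havoid⟩ := h
  obtain ⟨w, hxw, hwy⟩ := hpath.1.exists_reach_between <| by
    rintro rfl
    exact havoid (List.mem_singleton.2 he)
  rcases Sym2.eq_iff.1 he with ⟨rfl, hv⟩ | ⟨rfl, hv⟩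
  · exact ⟨w, hxw, by simpa only [← hv, SV.opp_opp] using hwy⟩
  · exact ⟨SV.opp w, by simpa only [SV.opp_opp] using hwy.opp,
      by simpa only [← hv, SV.opp_opp] using hxw.opp⟩

theorem BGraph.Reach.arc_of_cover (h : G.Reach u v) (hcover : ∀ w, G.Reach u w → ¬ G.Reach w v) :
    G.Arc u v := by
  obtain ⟨w, hArc, hwv⟩ := TransGen.head'_iff.1 h
  rcases reflTransGen_iff_eq_or_transGen.1 hwv with rfl | hwv
  · exact hArc
  · exact absurd hwv (hcover w (.single hArc))

theorem BGraph.Reach.sdiff_redundant (h : NoBCircuit G)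
    (hfin : ∀ u v, {w | G.Reach u w ∧ G.Reach w v}.Finite) (huv : G.Reach u v) :
    BGraph.Reach (G \ Redundant G) u v := by
  have := h.isStrictOrder_reach
  refine TransGen.mono (fun a b ⟨hab, hcover⟩ => ?_) _ _ (transGen_cover_of_finite_between hfin huv)
  refine ⟨hab.arc_of_cover hcover, fun hred => ?_⟩
  obtain ⟨w, haw, hwb⟩ := exists_reach_between_of_mem_redundant hred
  exact hcover w haw hwb

theorem ft_eq_of_reach (hHG : H ⊆ G) (hreach : ∀ u v, G.Reach u v → H.Reach u v) :
    ft G H = G := by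
  refine (Set.union_subset hHG fun _ he => he.1).antisymm fun e he => ?_
  induction e using Sym2.ind with
  | _ u v =>
    have huv : H.Reach u (SV.opp v) := hreach _ _ (.single (BGraph.arc_opp_iff.2 he))
    obtain ⟨l, hl⟩ := huv.exists_isBPath
    refine .inr ⟨he, u.1, u.2, v.1, v.2, l, ?_, rfl⟩
    simpa only [SV.opp, neg_neg] using hl

theorem sdiff_redundant_subset_of_ft_eq (hHG : H ⊆ G) (hft : ft G H = G) :
    G \ Redundant G ⊆ H := by
  rintro e ⟨he, hred⟩
  rcases hft.symm.subset he with heH | ⟨-, x, α, y, β, l, hpath, rfl⟩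
  · exact heH
  · by_contra heH
    refine hred ⟨he, x, α, y, β, l, rfl, hpath.mono hHG, fun hmem => heH ?_⟩
    obtain ⟨d, hd, hde⟩ := List.mem_map.1 hmem
    exact hde ▸ hpath.1.2.1.edge_mem hd

theorem isLeast_sdiff_redundant (h : NoBCircuit G)
    (hfin : ∀ u v, {w | G.Reach u w ∧ G.Reach w v}.Finite) :
    IsLeast {H | H ⊆ G ∧ ft G H = G} (G \ Redundant G) :=
  ⟨⟨Set.sdiff_subset, ft_eq_of_reach Set.sdiff_subset fun _ _ => .sdiff_redundant h hfin⟩,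
    fun _ ⟨hHG, hft⟩ => sdiff_redundant_subset_of_ft_eq hHG hft⟩

theorem isTR_iff_minimal : IsTR G H ↔ Minimal (· ∈ {H | H ⊆ G ∧ ft G H = G}) H := by
  rw [Set.minimal_iff_forall_ssubset, IsTR, ← and_assoc]
  exact and_congr_right fun ⟨hHG, _⟩ => forall₂_congr fun _ hlt =>
    not_congr (and_iff_right (hlt.subset.trans hHG)).symm

theorem stmt16_general (h : NoBCircuit G)
    (hfin : ∀ u v, {w | G.Reach u w ∧ G.Reach w v}.Finite) :
    IsTR G (G \ Redundant G) ∧ ∀ H, IsTR G H → H = G \ Redundant G := by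
  have hiff (H : BGraph V) : IsTR G H ↔ H = G \ Redundant G :=
    isTR_iff_minimal.trans (isLeast_sdiff_redundant h hfin).minimal_iff
  exact ⟨(hiff _).2 rfl, fun H => (hiff H).1⟩

end

/-- A bidirected graph `G` with no b-circuit has a unique transitive
reduction, namely `G` minus its redundant edges. -/
theorem stmt16 {V : Type} [Fintype V] (G : BGraph V) (h : NoBCircuit G) :
    IsTR G (G \ Redundant G) ∧ ∀ H, IsTR G H → H = G \ Redundant G :=
  stmt16_general h fun _ _ => Set.toFinite _
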